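/- arXiv:math/0305371 — 3 statements merged into one kernel-verified Lean document; each statement's English description precedes it below -/
import Mathlib

section
/- Let E = (E⁰, E¹, r, s) be a countable directed graph and H a complex Hilbert space. Let {P_v : v ∈ E⁰} be mutually orthogonal projections on H and {S_λ : λ ∈ E¹} bounded operators on H with S_λ* S_λ = P_{r(λ)} for all λ and ∑_{λ∈F} S_λ S_λ* ≤ P_v for every v ∈ E⁰ and every finite F ⊆ s⁻¹(v). Then: (1) for every bounded operator T on H and every h ∈ H, the family (S_λ T S_λ* h)_{λ∈E¹} is summable in H; (2) setting α(T)h := ∑_{λ∈E¹} S_λ T S_λ* h defines a bounded operator α(T) with ‖α(T)‖ ≤ ‖T‖; (3) α maps the commutant of {P_v : v ∈ E⁰} into itself and is a *-homomorphism on this commutant; (4) if T lies in this commutant, then α(T) S_λ = S_λ T for every λ ∈ E¹, and α(T)h = 0 whenever S_λ* h = 0 for all λ ∈ E¹. -/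
open scoped Classical

noncomputable section

namespace PSG

variable {G : Type*} [Group G] {Λ : Type*}

/-- `g ≤ h` in the left-invariant partial order induced by the submonoid `P`. -/
def qle (P : Submonoid G) (g h : G) : Prop := g⁻¹ * h ∈ P

/-- `r` is a common upper bound of `p` and `q` in `P`. -/
def IsUB (P : Submonoid G) (p q r : G) : Prop := r ∈ P ∧ qle P p r ∧ qle P q r

/-- `r` is the least common upper bound of `p` and `q` in `P`. -/
def IsLUB2 (P : Submonoid G) (p q r : G) : Prop :=
  IsUB P p q r ∧ ∀ r', IsUB P p q r' → qle P r r'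

/-- `r` is the least upper bound in `P` of the set of degrees `D`. -/
def IsLUBFam (P : Submonoid G) (D : Set G) (r : G) : Prop :=
  r ∈ P ∧ (∀ p ∈ D, qle P p r) ∧ ∀ r' ∈ P, (∀ p ∈ D, qle P p r') → qle P r r'

/-- `(G, P)` is quasi-lattice ordered: `P ∩ P⁻¹ = {1}` and every pair of elements of `P`
with a common upper bound in `P` has a least upper bound in `P`. -/
def QuasiLatticeOrdered (P : Submonoid G) : Prop :=
  (∀ g ∈ P, g⁻¹ ∈ P → g = 1) ∧
    ∀ p ∈ P, ∀ q ∈ P, (∃ r, IsUB P p q r) → ∃ r, IsLUB2 P p q r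

/-- A product system of graphs over `P`, encoded on a single edge set `Λ` (which contains the
vertices as the elements of degree `1`), with degree map `d`, source and range maps `src`, `rng`
(valued in vertices), and partial multiplication `mul` (meaningful when `rng a = src b`). -/
structure IsProductSystem (P : Submonoid G) (d : Λ → G) (src rng : Λ → Λ)
    (mul : Λ → Λ → Λ) : Prop where
  countable : Countable Λ
  d_mem : ∀ a, d a ∈ P
  d_src : ∀ a, d (src a) = 1
  d_rng : ∀ a, d (rng a) = 1
  src_vertex : ∀ v, d v = 1 → src v = v
  rng_vertex : ∀ v, d v = 1 → rng v = v
  d_mul : ∀ a b, rng a = src b → d (mul a b) = d a * d b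
  src_mul : ∀ a b, rng a = src b → src (mul a b) = src a
  rng_mul : ∀ a b, rng a = src b → rng (mul a b) = rng b
  mul_assoc' : ∀ a b c, rng a = src b → rng b = src c →
    mul (mul a b) c = mul a (mul b c)
  src_mul_self : ∀ a, mul (src a) a = a
  mul_rng_self : ∀ a, mul a (rng a) = a
  factor : ∀ p q : G, p ∈ P → q ∈ P → ∀ c, d c = p * q →
    ∃! ab : Λ × Λ, d ab.1 = p ∧ d ab.2 = q ∧ rng ab.1 = src ab.2 ∧ mul ab.1 ab.2 = c

/-- `a` is an initial segment of `c`: `c = a • b` for some (necessarily unique) `b`. -/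
def IsInit (src rng : Λ → Λ) (mul : Λ → Λ → Λ) (a c : Λ) : Prop :=
  ∃ b, rng a = src b ∧ mul a b = c

/-- The set of minimal common extensions of `μ` and `ν`. -/
def MCE (P : Submonoid G) (d : Λ → G) (src rng : Λ → Λ) (mul : Λ → Λ → Λ)
    (μ ν : Λ) : Set Λ :=
  {γ | IsInit src rng mul μ γ ∧ IsInit src rng mul ν γ ∧ IsLUB2 P (d μ) (d ν) (d γ)}

/-- The product system is finitely aligned. -/
def FinitelyAligned (P : Submonoid G) (d : Λ → G) (src rng : Λ → Λ)
    (mul : Λ → Λ → Λ) : Prop :=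
  ∀ μ ν : Λ, (MCE P d src rng mul μ ν).Finite

/-- The set of minimal common extensions of a set `S` of edges. -/
def MCEset (P : Submonoid G) (d : Λ → G) (src rng : Λ → Λ) (mul : Λ → Λ → Λ)
    (S : Set Λ) : Set Λ :=
  {γ | (∀ α ∈ S, IsInit src rng mul α γ) ∧ IsLUBFam P (d '' S) (d γ)}

/-- `∨F`: the union of `MCE(S)` over the nonempty subsets `S ⊆ F`. -/
def vee (P : Submonoid G) (d : Λ → G) (src rng : Λ → Λ) (mul : Λ → Λ → Λ)
    (F : Finset Λ) : Set Λ :=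
  {γ | ∃ S : Finset Λ, S.Nonempty ∧ S ⊆ F ∧ γ ∈ MCEset P d src rng mul ↑S}

/-- Given that `a` is an initial segment of `c`, the (unique) complementary segment;
junk value `c` otherwise. -/
def tail (src rng : Λ → Λ) (mul : Λ → Λ → Λ) (a c : Λ) : Λ :=
  if h : IsInit src rng mul a c then h.choose else c

section CstarFamilies

variable (P : Submonoid G) (d : Λ → G) (src rng : Λ → Λ) (mul : Λ → Λ → Λ)
variable {B : Type*} [CStarAlgebra B] [PartialOrder B] [StarOrderedRing B]

/-- A Toeplitz `E`-family in a C*-algebra `B` (conditions (1)–(4)). -/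
structure IsToeplitzFamily (t : Λ → B) : Prop where
  vertex_sa : ∀ v, d v = 1 → IsSelfAdjoint (t v)
  vertex_idem : ∀ v, d v = 1 → t v * t v = t v
  vertex_orth : ∀ v w, d v = 1 → d w = 1 → v ≠ w → t v * t w = 0
  mul_eq : ∀ a b, rng a = src b → t a * t b = t (mul a b)
  star_mul_self : ∀ a, star (t a) * t a = t (rng a)
  dom : ∀ p : G, p ∈ P → p ≠ 1 → ∀ v, d v = 1 → ∀ F : Finset Λ,
    (∀ a ∈ F, d a = p ∧ src a = v) → (∑ a ∈ F, t a * star (t a)) ≤ t v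

/-- The Nica-covariance/Cuntz–Krieger relation (5):
`tμ* tν = ∑_{γ = μα = νβ ∈ MCE(μ,ν)} tα tβ*`. -/
def TCKrel (t : Λ → B) : Prop :=
  ∀ μ ν : Λ, ∀ M : Finset Λ, ↑M = MCE P d src rng mul μ ν →
    star (t μ) * t ν =
      ∑ γ ∈ M, t (tail src rng mul μ γ) * star (t (tail src rng mul ν γ))

/-- A Toeplitz–Cuntz–Krieger `E`-family: conditions (1)–(5). -/
def IsTCKFamily (t : Λ → B) : Prop :=
  IsToeplitzFamily P d src rng mul t ∧ TCKrel P d src rng mul t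

/-- Condition (†): for every finite `R ⊆ P∖{1}`, every vertex `v`, and all finite sets
`F_p ⊆ s_p⁻¹(v)` (`p ∈ R`), the product `∏_{p ∈ R} (t_v − ∑_{a ∈ F_p} t_a t_a*)` is nonzero.
(The factors commute, so the product is stated for an arbitrary enumeration of `R`.) -/
def Dagger (t : Λ → B) : Prop :=
  ∀ R : List G, R.Nodup → (∀ p ∈ R, p ∈ P ∧ p ≠ 1) →
    ∀ v, d v = 1 → ∀ Fp : G → Finset Λ,
      (∀ p ∈ R, ∀ a ∈ Fp p, d a = p ∧ src a = v) →
        (R.map fun p => t v - ∑ a ∈ Fp p, t a * star (t a)).prod ≠ 0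

/-- The projection `Q^{∨F}_l = t_l t_l* ∏_{l α ∈ ∨F, d α ≠ 1} (t_{s(l)} − t_{lα} t_{lα}*)`.
(The factors commute, so the product is computed over an arbitrary enumeration.) -/
def Qproj (t : Λ → B) (F : Finset Λ) (l : Λ) : B :=
  if h : {α : Λ | d α ≠ 1 ∧ rng l = src α ∧ mul l α ∈ vee P d src rng mul F}.Finite then
    t l * star (t l) *
      (h.toFinset.toList.map fun α =>
        t (src l) - t (mul l α) * star (t (mul l α))).prod
  else 0

end CstarFamilies

/-- The positive cone `ℕ^k` inside `ℤ^k` (written multiplicatively). -/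
def posCone (k : ℕ) : Submonoid (Multiplicative (Fin k → ℤ)) where
  carrier := {g | ∀ i, 0 ≤ Multiplicative.toAdd g i}
  mul_mem' := by
    intro a b ha hb i
    simpa using add_nonneg (ha i) (hb i)
  one_mem' := by
    intro i
    simp

/-- The `i`-th standard generator of `ℕ^k ⊆ ℤ^k`. -/
def egen (k : ℕ) (i : Fin k) : Multiplicative (Fin k → ℤ) :=
  Multiplicative.ofAdd (Pi.single i 1)

end PSG

/-! A family `S` with `∑ S i S i* ≤ 1` on finite sets is the same as a contraction from the direct
sum of copies of `K` to `H`; compressing the diagonal operator `T ⊕ T ⊕ ⋯` by it shows that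
`α(T) = ∑ S i T S i*` converges strongly, with `‖α(T)‖ ≤ ‖T‖`, for every `T`. When the `S i` are
moreover partial isometries, the contractivity forces their ranges to be mutually orthogonal, so
that `α(T) S i = S i T` as soon as `T` commutes with the initial projection `S i* S i`;
multiplicativity of `α` follows by summing this identity. A Toeplitz–Cuntz–Krieger family is such a
family because its range projections at `v` sum to at most `P v`, and the `P v` to at most `1`. -/

namespace PSG

section PartialIsometry

open ContinuousLinearMap RCLike
open scoped InnerProduct InnerProductSpace

variable {𝕜 H K : Type*} [RCLike 𝕜]
  [NormedAddCommGroup H] [InnerProductSpace 𝕜 H] [CompleteSpace H]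
  [NormedAddCommGroup K] [InnerProductSpace 𝕜 K] [CompleteSpace K]

/-- A partial isometry between Hilbert spaces, in its algebraic form `S S* S = S`. -/
def IsPartialIsometry (S : K →L[𝕜] H) : Prop := S ∘L S† ∘L S = S

namespace IsPartialIsometry

lemma of_isIdempotentElem_adjoint_comp_self {S : K →L[𝕜] H}
    (hS : IsIdempotentElem (S† ∘L S)) : IsPartialIsometry S := by
  refine sub_eq_zero.mp (adjoint_comp_self_eq_zero_iff.mp ?_)
  have h : S† ∘L S ∘L S† ∘L S = S† ∘L S := hS
  simp only [map_sub, adjoint_comp, adjoint_adjoint, comp_sub, sub_comp, comp_assoc, h, sub_self]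

lemma norm_adjoint_apply_apply {S : K →L[𝕜] H} (hS : IsPartialIsometry S) (x : K) :
    ‖(S†) (S x)‖ = ‖S x‖ := by
  have hx : S ((S†) (S x)) = S x := congr($hS x)
  rw [← sq_eq_sq₀ (norm_nonneg _) (norm_nonneg _), apply_norm_sq_eq_inner_adjoint_left (S†),
    adjoint_adjoint, comp_apply, hx, inner_self_eq_norm_sq]

end IsPartialIsometry

lemma sum_norm_sq_adjoint_apply_le {ι : Type*} {S : ι → K →L[𝕜] H} {F : Finset ι} {A : H →L[𝕜] H}
    (h : ∑ i ∈ F, S i ∘L (S i)† ≤ A) (x : H) :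
    ∑ i ∈ F, ‖((S i)†) x‖ ^ 2 ≤ re ⟪A x, x⟫_𝕜 := by
  simpa [sum_apply, sum_inner, inner_sub_left, apply_norm_sq_eq_inner_adjoint_left] using
    ((le_def _ _).mp h).re_inner_nonneg_left x

lemma comp_eq_self_of_self_comp_adjoint_le {S : K →L[𝕜] H} {P : H →L[𝕜] H}
    (hP : IsStarProjection P) (h : S ∘L S† ≤ P) : P ∘L S = S := by
  have hadj : S† ∘L P = S† := by
    ext x
    have hPx : P (P x - x) = 0 := by
      rw [map_sub, sub_eq_zero]
      exact congr($(hP.isIdempotentElem.eq) x)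
    have hnorm : ‖(S†) (P x - x)‖ ^ 2 ≤ re ⟪P (P x - x), P x - x⟫_𝕜 := by
      simpa only [Finset.sum_singleton] using
        sum_norm_sq_adjoint_apply_le (S := fun _ : Unit => S) (F := {()})
          (by rwa [Finset.sum_singleton]) (P x - x)
    rw [hPx, inner_zero_left, map_zero] at hnorm
    simpa [sub_eq_zero] using hnorm
  simpa [hP.isSelfAdjoint.adjoint_eq] using congr($hadj†)

end PartialIsometry

section RowContraction

open ContinuousLinearMap RCLike
open scoped InnerProduct InnerProductSpace

variable {𝕜 ι H K : Type*} [RCLike 𝕜]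
  [NormedAddCommGroup H] [InnerProductSpace 𝕜 H] [CompleteSpace H]
  [NormedAddCommGroup K] [InnerProductSpace 𝕜 K] [CompleteSpace K]

/-- The family `S` is a row contraction: `(y i) ↦ ∑ S i (y i)` is a contraction on the Hilbert sum
of copies of `K`. The condition is stated through the adjoints, on finite subfamilies, so that it
makes no reference to convergence. -/
def IsRowContraction (S : ι → K →L[𝕜] H) : Prop :=
  ∀ F : Finset ι, ∑ i ∈ F, S i ∘L (S i)† ≤ 1

namespace IsRowContraction

variable {S : ι → K →L[𝕜] H}

lemma sum_norm_sq_adjoint_apply_le_norm_sq (hS : IsRowContraction S) (F : Finset ι) (x : H) :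
    ∑ i ∈ F, ‖((S i)†) x‖ ^ 2 ≤ ‖x‖ ^ 2 := by
  simpa [inner_self_eq_norm_sq] using sum_norm_sq_adjoint_apply_le (hS F) x

lemma norm_sq_sum_apply_le (hS : IsRowContraction S) (F : Finset ι) (y : ι → K) :
    ‖∑ i ∈ F, S i (y i)‖ ^ 2 ≤ ∑ i ∈ F, ‖y i‖ ^ 2 := by
  set z := ∑ i ∈ F, S i (y i) with hz
  have hinner : ‖z‖ ^ 2 = ∑ i ∈ F, re ⟪y i, ((S i)†) z⟫_𝕜 := by
    simp only [adjoint_inner_right, ← map_sum, ← sum_inner, ← hz, inner_self_eq_norm_sq]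
  have hterm (i : ι) : 2 * re ⟪y i, ((S i)†) z⟫_𝕜 ≤ ‖y i‖ ^ 2 + ‖((S i)†) z‖ ^ 2 := by
    linarith [re_inner_le_norm (𝕜 := 𝕜) (y i) (((S i)†) z),
      two_mul_le_add_sq ‖y i‖ ‖((S i)†) z‖]
  have hsum : 2 * ‖z‖ ^ 2 ≤ ∑ i ∈ F, ‖y i‖ ^ 2 + ∑ i ∈ F, ‖((S i)†) z‖ ^ 2 := by
    rw [hinner, Finset.mul_sum, ← Finset.sum_add_distrib]
    exact Finset.sum_le_sum fun i _ => hterm i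
  linarith [hS.sum_norm_sq_adjoint_apply_le_norm_sq F z]

lemma summable_apply (hS : IsRowContraction S) {y : ι → K} (hy : Summable fun i => ‖y i‖ ^ 2) :
    Summable fun i => S i (y i) := by
  refine summable_iff_vanishing_norm.mpr fun ε hε => ?_
  obtain ⟨F, hF⟩ := summable_iff_vanishing_norm.mp hy (ε ^ 2) (by positivity)
  refine ⟨F, fun G hG => lt_of_pow_lt_pow_left₀ 2 hε.le ?_⟩
  exact (hS.norm_sq_sum_apply_le G y).trans_lt ((le_abs_self _).trans_lt (hF G hG))

lemma sum_norm_sq_apply_adjoint_apply_le (hS : IsRowContraction S) (T : K →L[𝕜] K) (F : Finset ι)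
    (x : H) : ∑ i ∈ F, ‖T (((S i)†) x)‖ ^ 2 ≤ (‖T‖ * ‖x‖) ^ 2 :=
  calc ∑ i ∈ F, ‖T (((S i)†) x)‖ ^ 2
      ≤ ∑ i ∈ F, (‖T‖ * ‖((S i)†) x‖) ^ 2 := by gcongr; exact T.le_opNorm _
    _ = ‖T‖ ^ 2 * ∑ i ∈ F, ‖((S i)†) x‖ ^ 2 := by simp only [mul_pow, Finset.mul_sum]
    _ ≤ ‖T‖ ^ 2 * ‖x‖ ^ 2 := by gcongr; exact hS.sum_norm_sq_adjoint_apply_le_norm_sq F x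
    _ = (‖T‖ * ‖x‖) ^ 2 := (mul_pow _ _ _).symm

lemma summable_conj_apply (hS : IsRowContraction S) (T : K →L[𝕜] K) (x : H) :
    Summable fun i => S i (T (((S i)†) x)) :=
  hS.summable_apply <| summable_of_sum_le (fun _ => sq_nonneg _) fun F =>
    hS.sum_norm_sq_apply_adjoint_apply_le T F x

lemma norm_tsum_conj_apply_le (hS : IsRowContraction S) (T : K →L[𝕜] K) (x : H) :
    ‖∑' i, S i (T (((S i)†) x))‖ ≤ ‖T‖ * ‖x‖ := by
  refine le_of_tendsto (hS.summable_conj_apply T x).hasSum.norm (.of_forall fun F => ?_)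
  exact le_of_sq_le_sq ((hS.norm_sq_sum_apply_le F _).trans
    (hS.sum_norm_sq_apply_adjoint_apply_le T F x)) (by positivity)

/-- The map `T ↦ ∑ S i T S i*` attached to a row contraction `S`, the sum converging strongly. -/
def conjSum (hS : IsRowContraction S) : (K →L[𝕜] K) →L[𝕜] (H →L[𝕜] H) :=
  LinearMap.mkContinuous₂
    (LinearMap.mk₂ 𝕜 (fun T x => ∑' i, S i (T (((S i)†) x)))
      (fun T T' x => by
        simpa only [add_apply, map_add] using
          (hS.summable_conj_apply T x).tsum_add (hS.summable_conj_apply T' x))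
      (fun c T x => by
        simpa only [smul_apply, map_smul] using (hS.summable_conj_apply T x).tsum_const_smul c)
      (fun T x y => by
        simpa only [map_add] using
          (hS.summable_conj_apply T x).tsum_add (hS.summable_conj_apply T y))
      (fun c T x => by
        simpa only [map_smul] using (hS.summable_conj_apply T x).tsum_const_smul c))
    1 (fun T x => by simpa using hS.norm_tsum_conj_apply_le T x)

lemma hasSum_conjSum_apply (hS : IsRowContraction S) (T : K →L[𝕜] K) (x : H) :
    HasSum (fun i => S i (T (((S i)†) x))) (hS.conjSum T x) :=
  (hS.summable_conj_apply T x).hasSum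

lemma norm_conjSum_le (hS : IsRowContraction S) (T : K →L[𝕜] K) : ‖hS.conjSum T‖ ≤ ‖T‖ :=
  opNorm_le_bound _ (norm_nonneg T) (hS.norm_tsum_conj_apply_le T)

lemma conjSum_apply_eq_zero (hS : IsRowContraction S) (T : K →L[𝕜] K) {x : H}
    (hx : ∀ i, ((S i)†) x = 0) : hS.conjSum T x = 0 :=
  (hS.hasSum_conjSum_apply T x).unique (by simp [hx])

lemma conjSum_star (hS : IsRowContraction S) (T : K →L[𝕜] K) :
    hS.conjSum (star T) = star (hS.conjSum T) := by
  refine (eq_adjoint_iff _ _).mpr fun x y => ?_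
  have hx : HasSum (fun i => ⟪y, S i (star T (((S i)†) x))⟫_𝕜) ⟪y, hS.conjSum (star T) x⟫_𝕜 :=
    (hS.hasSum_conjSum_apply (star T) x).mapL (innerSL 𝕜 y)
  have hy : HasSum (fun i => ⟪x, S i (T (((S i)†) y))⟫_𝕜) ⟪x, hS.conjSum T y⟫_𝕜 :=
    (hS.hasSum_conjSum_apply T y).mapL (innerSL 𝕜 x)
  rw [← inner_conj_symm]
  refine hx.star.unique (hy.congr_fun fun i => ?_)
  simp [star_eq_adjoint, adjoint_inner_left, ← adjoint_inner_right (S i)]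

lemma commute_conjSum (hS : IsRowContraction S) {A : H →L[𝕜] H} {T : K →L[𝕜] K}
    (hA : ∀ i, Commute A (S i ∘L T ∘L (S i)†)) : Commute A (hS.conjSum T) := by
  ext x
  refine ((hS.hasSum_conjSum_apply T x).mapL A).unique ?_
  exact (hS.hasSum_conjSum_apply T (A x)).congr_fun fun i => congr($((hA i).eq) x)

lemma adjoint_apply_apply_eq_zero (hS : IsRowContraction S) {i j : ι} (hij : i ≠ j)
    (hj : IsPartialIsometry (S j)) (x : K) : ((S i)†) (S j x) = 0 := by
  classical
  have h := hS.sum_norm_sq_adjoint_apply_le_norm_sq {i, j} (S j x)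
  rw [Finset.sum_pair hij, hj.norm_adjoint_apply_apply] at h
  simpa using h

lemma conjSum_comp (hS : IsRowContraction S) {T : K →L[𝕜] K} {j : ι}
    (hj : IsPartialIsometry (S j)) (hT : Commute ((S j)† ∘L S j) T) :
    hS.conjSum T ∘L S j = S j ∘L T := by
  ext x
  have hsingle : hS.conjSum T (S j x) = S j (T (((S j)†) (S j x))) :=
    (hS.hasSum_conjSum_apply T (S j x)).unique <| hasSum_single j fun i hij => by
      simp only [hS.adjoint_apply_apply_eq_zero hij hj, map_zero]
  calc hS.conjSum T (S j x)
      = S j (T (((S j)†) (S j x))) := hsingle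
    _ = S j (((S j)†) (S j (T x))) := congr(S j ($(hT.symm.eq) x))
    _ = S j (T x) := congr($hj (T x))

lemma conjSum_mul (hS : IsRowContraction S) (hpi : ∀ i, IsPartialIsometry (S i))
    {T : K →L[𝕜] K} (hT : ∀ i, Commute ((S i)† ∘L S i) T) (T' : K →L[𝕜] K) :
    hS.conjSum (T * T') = hS.conjSum T * hS.conjSum T' := by
  ext x
  refine (hS.hasSum_conjSum_apply (T * T') x).unique ?_
  exact ((hS.hasSum_conjSum_apply T' x).mapL (hS.conjSum T)).congr_fun fun i =>
    congr($(hS.conjSum_comp (hpi i) (hT i)) (T' (((S i)†) x))).symm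

end IsRowContraction

end RowContraction

section GraphFamily

open ContinuousLinearMap

variable {𝕜 V E H : Type*} [RCLike 𝕜]
  [NormedAddCommGroup H] [InnerProductSpace 𝕜 H] [CompleteSpace H]

/-- A Toeplitz–Cuntz–Krieger family on `H` of the directed graph with vertices `V`, edges `E`, range
map `r` and source map `s`, the input of `α`. In contrast to `IsTCKFamily`, only the operators of
vertices and single edges are recorded; those of longer paths are products of these. -/
structure IsGraphTCKFamily (r s : E → V) (P : V → H →L[𝕜] H) (S : E → H →L[𝕜] H) : Prop where
  isSelfAdjoint : ∀ v, IsSelfAdjoint (P v)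
  orthogonalIdempotents : OrthogonalIdempotents P
  star_mul_self : ∀ l, star (S l) * S l = P (r l)
  sum_mul_star_le : ∀ v, ∀ F : Finset E, (∀ l ∈ F, s l = v) → ∑ l ∈ F, S l * star (S l) ≤ P v

lemma sum_le_one_of_orthogonalIdempotents {P : V → H →L[𝕜] H} (hsa : ∀ v, IsSelfAdjoint (P v))
    (hP : OrthogonalIdempotents P) (F : Finset V) : ∑ v ∈ F, P v ≤ 1 :=
  have hproj : IsStarProjection (∑ v ∈ F, P v) :=
    ⟨hP.isIdempotentElem_sum, isSelfAdjoint_sum F fun v _ => hsa v⟩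
  (le_def _ _).mpr (IsPositive.of_isStarProjection hproj.one_sub)

namespace IsGraphTCKFamily

variable {r s : E → V} {P : V → H →L[𝕜] H} {S : E → H →L[𝕜] H}

lemma isPartialIsometry (h : IsGraphTCKFamily r s P S) (l : E) : IsPartialIsometry (S l) := by
  have hidem : IsIdempotentElem (star (S l) * S l) :=
    (h.star_mul_self l).symm ▸ h.orthogonalIdempotents.idem (r l)
  exact .of_isIdempotentElem_adjoint_comp_self hidem

lemma isRowContraction (h : IsGraphTCKFamily r s P S) : IsRowContraction S := by
  classical
  intro F
  calc ∑ l ∈ F, S l * star (S l)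
      = ∑ v ∈ F.image s, ∑ l ∈ F with s l = v, S l * star (S l) :=
        (Finset.sum_fiberwise_of_maps_to (fun l hl => Finset.mem_image_of_mem s hl) _).symm
    _ ≤ ∑ v ∈ F.image s, P v := by
        rw [le_def, ← Finset.sum_sub_distrib]
        exact isPositive_sum _ fun v _ =>
          (le_def _ _).mp (h.sum_mul_star_le v _ fun l hl => (Finset.mem_filter.mp hl).2)
    _ ≤ 1 := sum_le_one_of_orthogonalIdempotents h.isSelfAdjoint h.orthogonalIdempotents _

lemma source_mul (h : IsGraphTCKFamily r s P S) (l : E) : P (s l) * S l = S l := by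
  have hle : S l * star (S l) ≤ P (s l) := by simpa using h.sum_mul_star_le (s l) {l} (by simp)
  exact comp_eq_self_of_self_comp_adjoint_le
    ⟨h.orthogonalIdempotents.idem (s l), h.isSelfAdjoint (s l)⟩ hle

lemma vertex_mul_of_ne (h : IsGraphTCKFamily r s P S) {v : V} {l : E} (hv : v ≠ s l) :
    P v * S l = 0 := by
  rw [← h.source_mul l, ← mul_assoc, h.orthogonalIdempotents.ortho hv, zero_mul]

lemma commute_vertex_conj (h : IsGraphTCKFamily r s P S) (v : V) (T : H →L[𝕜] H) (l : E) :
    Commute (P v) (S l * (T * star (S l))) := by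
  have hstar : star (S l) * P v = star (P v * S l) := by rw [star_mul, (h.isSelfAdjoint v).star_eq]
  rw [commute_iff_eq, mul_assoc (S l), mul_assoc T, hstar, ← mul_assoc]
  obtain rfl | hv := eq_or_ne v (s l)
  · rw [h.source_mul]
  · rw [h.vertex_mul_of_ne hv, star_zero, zero_mul, mul_zero, mul_zero]

lemma commute_adjoint_comp_self (h : IsGraphTCKFamily r s P S) {T : H →L[𝕜] H}
    (hT : ∀ v, Commute (P v) T) (l : E) : Commute (star (S l) * S l) T :=
  (h.star_mul_self l).symm ▸ hT (r l)

end IsGraphTCKFamily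

theorem stmt11_general {r s : E → V} {P : V → H →L[𝕜] H} {S : E → H →L[𝕜] H}
    (h : IsGraphTCKFamily r s P S) :
    ∃ α : (H →L[𝕜] H) →L[𝕜] (H →L[𝕜] H),
      (∀ T x, HasSum (fun l => S l (T (star (S l) x))) (α T x)) ∧
      (∀ T, ‖α T‖ ≤ ‖T‖) ∧
      (∀ T v, Commute (P v) (α T)) ∧
      (∀ T T', (∀ v, Commute (P v) T) → α (T * T') = α T * α T') ∧
      (∀ T, α (star T) = star (α T)) ∧
      (∀ T, (∀ v, Commute (P v) T) → ∀ l, α T * S l = S l * T) ∧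
      (∀ T x, (∀ l, star (S l) x = 0) → α T x = 0) :=
  have hS := h.isRowContraction
  ⟨hS.conjSum, hS.hasSum_conjSum_apply, hS.norm_conjSum_le,
    fun T v => hS.commute_conjSum (h.commute_vertex_conj v T),
    fun _ T' hT => hS.conjSum_mul h.isPartialIsometry (h.commute_adjoint_comp_self hT) T',
    hS.conjSum_star,
    fun _ hT l => hS.conjSum_comp (h.isPartialIsometry l) (h.commute_adjoint_comp_self hT l),
    fun T _ hx => hS.conjSum_apply_eq_zero T hx⟩

end GraphFamily

/-- Proposition 6.2 for a single graph: the endomorphism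
`α(T) = ∑_{λ∈E¹} S_λ T S_λ*` of the commutant of `{P_v}`. -/
theorem stmt11 {V E : Type*} [Countable V] [Countable E] (r s : E → V)
    {H : Type*} [NormedAddCommGroup H] [InnerProductSpace ℂ H] [CompleteSpace H]
    (Pv : V → H →L[ℂ] H) (S : E → H →L[ℂ] H)
    (hsa : ∀ v, IsSelfAdjoint (Pv v)) (hidem : ∀ v, Pv v * Pv v = Pv v)
    (horth : ∀ v w, v ≠ w → Pv v * Pv w = 0)
    (hiso : ∀ l, star (S l) * S l = Pv (r l))
    (hdom : ∀ v : V, ∀ F : Finset E, (∀ l ∈ F, s l = v) →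
      (∑ l ∈ F, S l * star (S l)) ≤ Pv v) :
    ∃ α : (H →L[ℂ] H) → (H →L[ℂ] H),
      (∀ T : H →L[ℂ] H, ∀ h : H,
        HasSum (fun l : E => S l (T (star (S l) h))) (α T h)) ∧
      (∀ T, ‖α T‖ ≤ ‖T‖) ∧
      (∀ T, (∀ v, Pv v * T = T * Pv v) → ∀ v, Pv v * α T = α T * Pv v) ∧
      (∀ T T', (∀ v, Pv v * T = T * Pv v) → (∀ v, Pv v * T' = T' * Pv v) →
        α (T * T') = α T * α T' ∧ α (T + T') = α T + α T') ∧
      (∀ T, (∀ v, Pv v * T = T * Pv v) → α (star T) = star (α T)) ∧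
      (∀ T, (∀ v, Pv v * T = T * Pv v) → ∀ l, α T * S l = S l * T) ∧
      (∀ T, (∀ v, Pv v * T = T * Pv v) → ∀ h : H,
        (∀ l, star (S l) h = 0) → α T h = 0) := by
  obtain ⟨α, hsum, hnorm, hcomm, hmul, hstar, hedge, hzero⟩ :=
    stmt11_general (r := r) (s := s) ⟨hsa, ⟨hidem, horth⟩, hiso, hdom⟩
  exact ⟨α, hsum, hnorm, fun T _ v => hcomm T v, fun T T' hT _ => ⟨hmul T T' hT, map_add α T T'⟩,
    fun T _ => hstar T, hedge, fun T _ => hzero T⟩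

end PSG
end
end

section
/- Let (G,P) be a quasi-lattice ordered group, (E,φ) a finitely aligned product system of graphs over P, and {S_λ : λ ∈ E¹} a Toeplitz E-family of operators on a Hilbert space H. For each p ∈ P the sum ∑_{μ∈E¹_p} S_μ S_μ* converges in the strong operator topology to a projection Q_p. Then the following are equivalent: (i) for all p,q ∈ P, Q_p Q_q = Q_{p∨q} when p ∨ q < ∞, and Q_p Q_q = 0 when p ∨ q = ∞; (ii) S_μ* S_ν = ∑_{γ = μα = νβ ∈ MCE(μ,ν)} S_α S_β* for all μ,ν ∈ E¹ (the sum being 0 when MCE(μ,ν) = ∅). -/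
open scoped Classical

noncomputable section

namespace PSG

/-!
Write `P_a = S_a S_a*`. Multiplying by `S_μ`, `S_ν*` in one direction and by `S_μ*`, `S_ν` in the
other shows that (ii) says exactly `P_μ P_ν = ∑_{γ ∈ MCE(μ, ν)} P_γ`. If `d μ ≤ d γ`, then
`P_μ P_γ` is `P_γ` when `γ` extends `μ` and `0` otherwise, so `∑_{γ ∈ MCE(μ, ν)} P_γ` is the
compression `P_μ Q_{d μ ∨ d ν} P_ν`. Since `P_μ P_ν = P_μ Q_{d μ} Q_{d ν} P_ν`, (i) implies (ii).
Conversely, under (ii) every product `P_μ P_ν` with `d μ = p` and `d ν = q` is fixed by right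
multiplication by `Q_{p ∨ q}`; summing over `μ` and `ν` gives `Q_p Q_q = Q_p Q_q Q_{p ∨ q}`, and the
right-hand side is `Q_{p ∨ q}` because `Q_p` and `Q_q` dominate it.
-/

section StrongSum

variable {ι κ R M : Type*} [Semiring R] [TopologicalSpace M] [AddCommMonoid M] [Module R M]
  {f : ι → M →L[R] M} {g : κ → M →L[R] M} {A C T U : M →L[R] M}

/-- `T` is the sum of the operators `f i` in the strong operator topology: the series converges
unconditionally at every vector. -/
def HasStrongSum (f : ι → M →L[R] M) (T : M →L[R] M) : Prop :=
  ∀ x, HasSum (fun i => f i x) (T x)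

namespace HasStrongSum

lemma mul_left (hf : HasStrongSum f T) (A : M →L[R] M) :
    HasStrongSum (fun i => A * f i) (A * T) :=
  fun x => (hf x).mapL A

lemma mul_right (hf : HasStrongSum f T) (A : M →L[R] M) :
    HasStrongSum (fun i => f i * A) (T * A) :=
  fun x => hf (A x)

lemma unique [T2Space M] (hT : HasStrongSum f T) (hU : HasStrongSum f U) : T = U :=
  ContinuousLinearMap.ext fun x => (hT x).unique (hU x)

lemma mul_right_congr [T2Space M] (hf : HasStrongSum f T) (h : ∀ i, f i * A = f i * C) :
    T * A = T * C :=
  (hf.mul_right A).unique (by simpa only [h] using hf.mul_right C)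

lemma mul_mul_congr [T2Space M] (hf : HasStrongSum f T) (hg : HasStrongSum g U)
    (h : ∀ i j, f i * g j * A = f i * g j * C) : T * U * A = T * U * C :=
  (hf.mul_right U).mul_right_congr fun i => (hg.mul_left (f i)).mul_right_congr (h i)

end HasStrongSum

lemma hasStrongSum_sum [ContinuousAdd M] {s : Finset ι} (hf : ∀ i ∉ s, f i = 0) :
    HasStrongSum f (∑ i ∈ s, f i) := by
  intro x
  rw [_root_.sum_apply]
  exact hasSum_sum_of_ne_finset_zero fun i hi => by rw [hf i hi, zero_apply]

end StrongSum

lemma HasStrongSum.isSelfAdjoint {ι 𝕜 E : Type*} [RCLike 𝕜] [NormedAddCommGroup E]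
    [InnerProductSpace 𝕜 E] [CompleteSpace E] {f : ι → E →L[𝕜] E} {T : E →L[𝕜] E}
    (hT : HasStrongSum f T) (hf : ∀ i, IsSelfAdjoint (f i)) : IsSelfAdjoint T := by
  rw [ContinuousLinearMap.isSelfAdjoint_iff_isSymmetric]
  intro x y
  have hleft : HasSum (fun i => inner 𝕜 (f i x) y) (inner 𝕜 (T x) y) :=
    (hT x).map (innerSLFlip 𝕜 y) (innerSLFlip 𝕜 y).continuous
  have hright : HasSum (fun i => inner 𝕜 x (f i y)) (inner 𝕜 x (T y)) := (hT y).mapL (innerSL 𝕜 x)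
  have hsymm : (fun i => inner 𝕜 (f i x) y) = fun i => inner 𝕜 x (f i y) :=
    funext fun i => (hf i).isSymmetric x y
  exact hleft.unique (hsymm ▸ hright)

section StarProjection

variable {B : Type*} [CStarAlgebra B] [PartialOrder B] [StarOrderedRing B] {p q : B}

lemma mul_eq_zero_of_isStarProjection_of_add_le_one (hp : IsStarProjection p)
    (hq : IsStarProjection q) (h : p + q ≤ 1) : p * q = 0 := by
  have hpq : p * (1 - q) = p := (hp.le_iff_mul_eq_left hq.one_sub).mp (le_sub_iff_add_le.mpr h)
  rwa [mul_sub, mul_one, sub_eq_self] at hpq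

end StarProjection

/-- The range projection `t_a t_a*` of the partial isometry `t_a`. -/
def rangeProj {Λ B : Type*} [Mul B] [Star B] (t : Λ → B) (a : Λ) : B := t a * star (t a)

lemma isSelfAdjoint_rangeProj {Λ B : Type*} [Mul B] [StarMul B] (t : Λ → B) (a : Λ) :
    IsSelfAdjoint (rangeProj t a) :=
  .mul_star_self (t a)

section Degrees

variable {G : Type*} [Group G] {Λ : Type*} {P : Submonoid G} {d : Λ → G} {src rng : Λ → Λ}
  {mul : Λ → Λ → Λ}

lemma qle_refl (P : Submonoid G) (g : G) : qle P g g := by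
  rw [qle, inv_mul_cancel]
  exact P.one_mem

lemma qle_antisymm (hQLO : QuasiLatticeOrdered P) {g h : G} (hgh : qle P g h)
    (hhg : qle P h g) : g = h :=
  inv_mul_eq_one.mp (hQLO.1 _ hgh (by simpa only [qle, mul_inv_rev, inv_inv] using hhg))

lemma IsLUB2.unique (hQLO : QuasiLatticeOrdered P) {p q r r' : G} (h : IsLUB2 P p q r)
    (h' : IsLUB2 P p q r') : r = r' :=
  qle_antisymm hQLO (h.2 _ h'.1) (h'.2 _ h.1)

lemma MCE_eq_empty {a b : Λ} (h : ¬ ∃ r, IsUB P (d a) (d b) r) :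
    MCE P d src rng mul a b = ∅ :=
  Set.eq_empty_of_forall_notMem fun _ hγ => h ⟨_, hγ.2.2.1⟩

lemma IsInit.rng_eq_src_tail {a c : Λ} (h : IsInit src rng mul a c) :
    rng a = src (tail src rng mul a c) := by
  rw [tail, dif_pos h]
  exact h.choose_spec.1

lemma IsInit.mul_tail {a c : Λ} (h : IsInit src rng mul a c) :
    mul a (tail src rng mul a c) = c := by
  rw [tail, dif_pos h]
  exact h.choose_spec.2

lemma IsProductSystem.exists_isInit (hPS : IsProductSystem P d src rng mul) {p : G} (hp : p ∈ P)
    {c : Λ} (hle : qle P p (d c)) : ∃ a, d a = p ∧ IsInit src rng mul a c := by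
  obtain ⟨⟨a, b⟩, ⟨ha, -, hab, hc⟩, -⟩ :=
    hPS.factor p (p⁻¹ * d c) hp hle c (mul_inv_cancel_left p (d c)).symm
  exact ⟨a, ha, b, hab, hc⟩

end Degrees

section ToeplitzFamily

variable {G : Type*} [Group G] {Λ : Type*} {P : Submonoid G} {d : Λ → G} {src rng : Λ → Λ}
  {mul : Λ → Λ → Λ} {B : Type*} [CStarAlgebra B] [PartialOrder B] {t : Λ → B} {a b c : Λ}

namespace IsToeplitzFamily

lemma isStarProjection_vertex (hT : IsToeplitzFamily P d src rng mul t) {v : Λ} (hv : d v = 1) :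
    IsStarProjection (t v) :=
  ⟨hT.vertex_idem v hv, hT.vertex_sa v hv⟩

lemma src_mul (hT : IsToeplitzFamily P d src rng mul t) (hPS : IsProductSystem P d src rng mul)
    (a : Λ) : t (src a) * t a = t a := by
  rw [hT.mul_eq _ _ (hPS.rng_vertex _ (hPS.d_src a)), hPS.src_mul_self]

lemma mul_rng (hT : IsToeplitzFamily P d src rng mul t) (hPS : IsProductSystem P d src rng mul)
    (a : Λ) : t a * t (rng a) = t a := by
  rw [hT.mul_eq _ _ (hPS.src_vertex _ (hPS.d_rng a)).symm, hPS.mul_rng_self]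

lemma mul_tail (hT : IsToeplitzFamily P d src rng mul t) (h : IsInit src rng mul a c) :
    t a * t (tail src rng mul a c) = t c := by
  rw [hT.mul_eq _ _ h.rng_eq_src_tail, h.mul_tail]

lemma star_mul_of_isInit (hT : IsToeplitzFamily P d src rng mul t)
    (hPS : IsProductSystem P d src rng mul) (h : IsInit src rng mul a c) :
    star (t a) * t c = t (tail src rng mul a c) := by
  rw [← hT.mul_tail h, ← mul_assoc, hT.star_mul_self, h.rng_eq_src_tail, hT.src_mul hPS]

lemma rangeProj_mul_self (hT : IsToeplitzFamily P d src rng mul t)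
    (hPS : IsProductSystem P d src rng mul) (a : Λ) : rangeProj t a * t a = t a := by
  rw [rangeProj, mul_assoc, hT.star_mul_self, hT.mul_rng hPS]

lemma star_mul_rangeProj (hT : IsToeplitzFamily P d src rng mul t)
    (hPS : IsProductSystem P d src rng mul) (a : Λ) :
    star (t a) * rangeProj t a = star (t a) := by
  simpa only [star_mul, (isSelfAdjoint_rangeProj t a).star_eq] using
    congr(star $(hT.rangeProj_mul_self hPS a))

lemma isStarProjection_rangeProj (hT : IsToeplitzFamily P d src rng mul t)
    (hPS : IsProductSystem P d src rng mul) (a : Λ) : IsStarProjection (rangeProj t a) where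
  isIdempotentElem := by
    rw [IsIdempotentElem]
    nth_rw 2 [rangeProj]
    rw [← mul_assoc, hT.rangeProj_mul_self hPS, rangeProj]
  isSelfAdjoint := isSelfAdjoint_rangeProj t a

lemma rangeProj_mul_of_isInit (hT : IsToeplitzFamily P d src rng mul t)
    (hPS : IsProductSystem P d src rng mul) (h : IsInit src rng mul a c) :
    rangeProj t a * rangeProj t c = rangeProj t c := by
  have hmul : rangeProj t a * t c = t c := by
    rw [← hT.mul_tail h, ← mul_assoc, hT.rangeProj_mul_self hPS]
  rw [rangeProj.eq_1 t c, ← mul_assoc, hmul]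

lemma mul_mul_star_mul_star (hT : IsToeplitzFamily P d src rng mul t)
    (ha : IsInit src rng mul a c) (hb : IsInit src rng mul b c) :
    t a * (t (tail src rng mul a c) * star (t (tail src rng mul b c))) * star (t b) =
      rangeProj t c := by
  rw [← mul_assoc, hT.mul_tail ha, mul_assoc, ← star_mul, hT.mul_tail hb, rangeProj]

lemma star_mul_rangeProj_mul (hT : IsToeplitzFamily P d src rng mul t)
    (hPS : IsProductSystem P d src rng mul) (ha : IsInit src rng mul a c)
    (hb : IsInit src rng mul b c) :
    star (t a) * rangeProj t c * t b =
      t (tail src rng mul a c) * star (t (tail src rng mul b c)) := by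
  rw [rangeProj, ← mul_assoc, hT.star_mul_of_isInit hPS ha, mul_assoc,
    ← hT.star_mul_of_isInit hPS hb, star_mul, star_star]

end IsToeplitzFamily

/-- Relation (5) in terms of range projections:
`t_μ t_μ* t_ν t_ν* = ∑_{γ ∈ MCE(μ, ν)} t_γ t_γ*`. As in `TCKrel`, nothing is required of pairs for
which `MCE(μ, ν)` is infinite. -/
def RangeProjRel (P : Submonoid G) (d : Λ → G) (src rng : Λ → Λ) (mul : Λ → Λ → Λ)
    (t : Λ → B) : Prop :=
  ∀ a b : Λ, ∀ M : Finset Λ, ↑M = MCE P d src rng mul a b →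
    rangeProj t a * rangeProj t b = ∑ γ ∈ M, rangeProj t γ

lemma IsToeplitzFamily.tckRel_iff_rangeProjRel (hT : IsToeplitzFamily P d src rng mul t)
    (hPS : IsProductSystem P d src rng mul) :
    TCKrel P d src rng mul t ↔ RangeProjRel P d src rng mul t := by
  constructor
  · intro hrel a b M hM
    have hab : rangeProj t a * rangeProj t b = t a * (star (t a) * t b) * star (t b) := by
      simp only [rangeProj, mul_assoc]
    rw [hab, hrel a b M hM, Finset.mul_sum, Finset.sum_mul]
    refine Finset.sum_congr rfl fun γ hγ => ?_
    obtain ⟨ha, hb, -⟩ := hM.subset hγ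
    exact hT.mul_mul_star_mul_star ha hb
  · intro hrel a b M hM
    have hab : star (t a) * t b = star (t a) * (rangeProj t a * rangeProj t b) * t b := by
      rw [← mul_assoc, hT.star_mul_rangeProj hPS, mul_assoc, hT.rangeProj_mul_self hPS]
    rw [hab, hrel a b M hM, Finset.mul_sum, Finset.sum_mul]
    refine Finset.sum_congr rfl fun γ hγ => ?_
    obtain ⟨ha, hb, -⟩ := hM.subset hγ
    exact hT.star_mul_rangeProj_mul hPS ha hb

namespace IsToeplitzFamily

variable [StarOrderedRing B]

lemma rangeProj_mul_rangeProj_of_ne (hT : IsToeplitzFamily P d src rng mul t)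
    (hPS : IsProductSystem P d src rng mul) (hd : d a = d b) (hne : a ≠ b) :
    rangeProj t a * rangeProj t b = 0 := by
  by_cases hsrc : src a = src b
  · have hd1 : d a ≠ 1 := fun h1 =>
      hne (by rw [← hPS.src_vertex a h1, hsrc, hPS.src_vertex b (hd ▸ h1)])
    have hle : ∑ c ∈ {a, b}, rangeProj t c ≤ t (src b) :=
      hT.dom (d a) (hPS.d_mem a) hd1 (src b) (hPS.d_src b) {a, b} (by simp [hsrc, hd])
    rw [Finset.sum_pair hne] at hle
    exact mul_eq_zero_of_isStarProjection_of_add_le_one (hT.isStarProjection_rangeProj hPS a)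
      (hT.isStarProjection_rangeProj hPS b)
      (hle.trans (hT.isStarProjection_vertex (hPS.d_src b)).le_one)
  · have hstar : star (t a) * t b = 0 := by
      rw [← hT.src_mul hPS a, ← hT.src_mul hPS b, star_mul,
        (hT.vertex_sa _ (hPS.d_src a)).star_eq, mul_assoc, ← mul_assoc (t (src a)),
        hT.vertex_orth _ _ (hPS.d_src a) (hPS.d_src b) hsrc, zero_mul, mul_zero]
    rw [rangeProj, rangeProj, mul_assoc, ← mul_assoc (star (t a)), hstar, zero_mul, mul_zero]

lemma rangeProj_mul_rangeProj_of_qle (hT : IsToeplitzFamily P d src rng mul t)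
    (hPS : IsProductSystem P d src rng mul) (hle : qle P (d a) (d c)) :
    rangeProj t a * rangeProj t c = if IsInit src rng mul a c then rangeProj t c else 0 := by
  split_ifs with h
  · exact hT.rangeProj_mul_of_isInit hPS h
  · obtain ⟨a', ha', hinit⟩ := hPS.exists_isInit (hPS.d_mem a) hle
    have hne : a ≠ a' := fun heq => h (heq ▸ hinit)
    rw [← hT.rangeProj_mul_of_isInit hPS hinit, ← mul_assoc,
      hT.rangeProj_mul_rangeProj_of_ne hPS ha'.symm hne, zero_mul]

lemma rangeProj_mul_rangeProj_mul_rangeProj (hT : IsToeplitzFamily P d src rng mul t)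
    (hPS : IsProductSystem P d src rng mul) (hlub : IsLUB2 P (d a) (d b) (d c)) :
    rangeProj t a * rangeProj t c * rangeProj t b =
      if c ∈ MCE P d src rng mul a b then rangeProj t c else 0 := by
  have hb : rangeProj t c * rangeProj t b =
      if IsInit src rng mul b c then rangeProj t c else 0 := by
    simpa only [star_mul, (isSelfAdjoint_rangeProj t _).star_eq, apply_ite star, star_zero] using
      congr(star $(hT.rangeProj_mul_rangeProj_of_qle hPS hlub.1.2.2))
  simp only [MCE, Set.mem_ofPred_eq, hlub, and_true, ite_and]
  rw [hT.rangeProj_mul_rangeProj_of_qle hPS hlub.1.2.1, ite_mul, zero_mul, hb]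

end IsToeplitzFamily

end ToeplitzFamily

section DegreeProjection

variable {G : Type*} {Λ : Type*} {d : Λ → G} {H : Type*} [NormedAddCommGroup H]
  [InnerProductSpace ℂ H] [CompleteSpace H] {S : Λ → H →L[ℂ] H} {p q r : G}
  {Qp Qq Qr : H →L[ℂ] H}

/-- `T` is the projection `Q_p = ∑_{μ ∈ E¹_p} S_μ S_μ*`, the sum converging strongly. -/
def IsDegreeProj (d : Λ → G) (S : Λ → H →L[ℂ] H) (p : G) (T : H →L[ℂ] H) : Prop :=
  HasStrongSum (fun μ : {a : Λ // d a = p} => rangeProj S μ) T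

lemma IsDegreeProj.isSelfAdjoint (hp : IsDegreeProj d S p Qp) : IsSelfAdjoint Qp :=
  HasStrongSum.isSelfAdjoint hp fun _ => isSelfAdjoint_rangeProj S _

variable [Group G] {P : Submonoid G} {src rng : Λ → Λ} {mul : Λ → Λ → Λ} {a b c : Λ}

namespace IsDegreeProj

lemma mul_rangeProj_of_qle (hp : IsDegreeProj d S p Qp) (hT : IsToeplitzFamily P d src rng mul S)
    (hPS : IsProductSystem P d src rng mul) (hpP : p ∈ P) (hle : qle P p (d c)) :
    Qp * rangeProj S c = rangeProj S c := by
  obtain ⟨a, ha, hinit⟩ := hPS.exists_isInit hpP hle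
  have hQa : Qp * rangeProj S a = rangeProj S a := by
    have hsum : HasStrongSum (fun μ : {a : Λ // d a = p} => rangeProj S μ * rangeProj S a)
        (∑ μ ∈ {(⟨a, ha⟩ : {a : Λ // d a = p})}, rangeProj S μ * rangeProj S a) := by
      refine hasStrongSum_sum fun μ hμ =>
        hT.rangeProj_mul_rangeProj_of_ne hPS (μ.2.trans ha.symm) ?_
      exact fun heq => hμ (Finset.mem_singleton.mpr (Subtype.ext heq))
    rw [(hp.mul_right (rangeProj S a)).unique hsum, Finset.sum_singleton,
      (hT.isStarProjection_rangeProj hPS a).isIdempotentElem]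
  rw [← hT.rangeProj_mul_of_isInit hPS hinit, ← mul_assoc, hQa]

lemma rangeProj_mul_of_qle (hp : IsDegreeProj d S p Qp) (hT : IsToeplitzFamily P d src rng mul S)
    (hPS : IsProductSystem P d src rng mul) (hpP : p ∈ P) (hle : qle P p (d c)) :
    rangeProj S c * Qp = rangeProj S c := by
  simpa only [star_mul, (isSelfAdjoint_rangeProj S c).star_eq, hp.isSelfAdjoint.star_eq] using
    congr(star $(hp.mul_rangeProj_of_qle hT hPS hpP hle))

lemma mul_of_qle (hp : IsDegreeProj d S p Qp) (hq : IsDegreeProj d S q Qq)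
    (hT : IsToeplitzFamily P d src rng mul S) (hPS : IsProductSystem P d src rng mul)
    (hpP : p ∈ P) (hle : qle P p q) : Qp * Qq = Qq := by
  have hfix (μ : {a : Λ // d a = q}) : Qp * rangeProj S μ = rangeProj S μ :=
    hp.mul_rangeProj_of_qle hT hPS hpP (by rwa [μ.2])
  have hsum := hq.mul_left Qp
  simp only [hfix] at hsum
  exact hsum.unique hq

lemma rangeProj_mul_mul_mul_rangeProj (hp : IsDegreeProj d S (d a) Qp)
    (hq : IsDegreeProj d S (d b) Qq) (hT : IsToeplitzFamily P d src rng mul S)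
    (hPS : IsProductSystem P d src rng mul) :
    rangeProj S a * (Qp * Qq) * rangeProj S b = rangeProj S a * rangeProj S b := by
  rw [← mul_assoc, hp.rangeProj_mul_of_qle hT hPS (hPS.d_mem a) (qle_refl P _), mul_assoc,
    hq.mul_rangeProj_of_qle hT hPS (hPS.d_mem b) (qle_refl P _)]

lemma rangeProj_mul_mul_rangeProj_eq_sum (hr : IsDegreeProj d S r Qr)
    (hT : IsToeplitzFamily P d src rng mul S) (hPS : IsProductSystem P d src rng mul)
    (hQLO : QuasiLatticeOrdered P) (hlub : IsLUB2 P (d a) (d b) r) {M : Finset Λ}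
    (hM : ↑M = MCE P d src rng mul a b) :
    rangeProj S a * Qr * rangeProj S b = ∑ γ ∈ M, rangeProj S γ := by
  have hmem (γ : Λ) : γ ∈ MCE P d src rng mul a b ↔ γ ∈ M := by rw [← hM, Finset.mem_coe]
  have hdeg (γ : Λ) (hγ : γ ∈ M) : d γ = r := ((hmem γ).mpr hγ).2.2.unique hQLO hlub
  have hterm (γ : {c : Λ // d c = r}) :
      rangeProj S a * rangeProj S γ * rangeProj S b = if γ.1 ∈ M then rangeProj S γ else 0 := by
    have hγlub : IsLUB2 P (d a) (d b) (d γ) := by rwa [γ.2]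
    simpa only [hmem] using hT.rangeProj_mul_rangeProj_mul_rangeProj hPS hγlub
  have hsum : HasStrongSum
      (fun γ : {c : Λ // d c = r} => rangeProj S a * rangeProj S γ * rangeProj S b)
      (∑ γ ∈ M.subtype (d · = r), rangeProj S a * rangeProj S γ * rangeProj S b) :=
    hasStrongSum_sum fun γ hγ => by rw [hterm, if_neg (by simpa only [Finset.mem_subtype] using hγ)]
  rw [((hr.mul_left _).mul_right _).unique hsum, ← Finset.sum_subtype_of_mem _ hdeg]
  exact Finset.sum_congr rfl fun γ hγ => by
    rw [hterm, if_pos (Finset.mem_subtype.mp hγ)]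

end IsDegreeProj

namespace RangeProjRel

lemma rangeProj_mul_rangeProj_eq_zero (hrel : RangeProjRel P d src rng mul S)
    (hub : ¬ ∃ r, IsUB P (d a) (d b) r) : rangeProj S a * rangeProj S b = 0 := by
  rw [hrel a b ∅ (by rw [MCE_eq_empty hub, Finset.coe_empty]), Finset.sum_empty]

lemma rangeProj_mul_rangeProj_mul (hrel : RangeProjRel P d src rng mul S)
    (hT : IsToeplitzFamily P d src rng mul S) (hPS : IsProductSystem P d src rng mul)
    (hfin : (MCE P d src rng mul a b).Finite)
    (hlub : IsLUB2 P (d a) (d b) r) (hr : IsDegreeProj d S r Qr) :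
    rangeProj S a * rangeProj S b * Qr = rangeProj S a * rangeProj S b := by
  rw [hrel a b hfin.toFinset hfin.coe_toFinset, Finset.sum_mul]
  refine Finset.sum_congr rfl fun γ hγ => hr.rangeProj_mul_of_qle hT hPS hlub.1.1 ?_
  obtain ⟨-, -, hγlub⟩ := hfin.mem_toFinset.mp hγ
  exact hlub.2 _ hγlub.1

lemma degreeProj_mul_degreeProj_eq_zero (hrel : RangeProjRel P d src rng mul S)
    (hp : IsDegreeProj d S p Qp) (hq : IsDegreeProj d S q Qq) (hub : ¬ ∃ r, IsUB P p q r) :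
    Qp * Qq = 0 := by
  have hzero : Qp * Qq * 1 = Qp * Qq * 0 := hp.mul_mul_congr hq <| by
    rintro ⟨a, rfl⟩ ⟨b, rfl⟩
    rw [hrel.rangeProj_mul_rangeProj_eq_zero hub, zero_mul, zero_mul]
  rwa [mul_one, mul_zero] at hzero

lemma degreeProj_mul_degreeProj (hrel : RangeProjRel P d src rng mul S)
    (hT : IsToeplitzFamily P d src rng mul S) (hPS : IsProductSystem P d src rng mul)
    (hFA : FinitelyAligned P d src rng mul)
    (hpP : p ∈ P) (hqP : q ∈ P) (hlub : IsLUB2 P p q r) (hp : IsDegreeProj d S p Qp)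
    (hq : IsDegreeProj d S q Qq) (hr : IsDegreeProj d S r Qr) : Qp * Qq = Qr := by
  have habsorb : Qp * Qq * Qr = Qp * Qq * 1 := hp.mul_mul_congr hq <| by
    rintro ⟨a, rfl⟩ ⟨b, rfl⟩
    rw [hrel.rangeProj_mul_rangeProj_mul hT hPS (hFA a b) hlub hr, mul_one]
  have hdominate : Qp * Qq * Qr = Qr := by
    rw [mul_assoc, hq.mul_of_qle hr hT hPS hqP hlub.1.2.2,
      hp.mul_of_qle hr hT hPS hpP hlub.1.2.1]
  rw [← hdominate, habsorb, mul_one]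

end RangeProjRel

end DegreeProjection

/-- Proposition 6.1 (Nica covariance for Toeplitz families): with
`Q_p = ∑_{μ∈E¹_p} S_μ S_μ*` (strong convergence), the spatial Nica-covariance condition (i)
is equivalent to the Cuntz–Krieger-type relation (ii). -/
theorem stmt12 {G : Type*} [Group G] {Λ : Type*} (P : Submonoid G)
    (hQLO : QuasiLatticeOrdered P)
    (d : Λ → G) (src rng : Λ → Λ) (mul : Λ → Λ → Λ)
    (hPS : IsProductSystem P d src rng mul)
    (hFA : FinitelyAligned P d src rng mul)
    {H : Type*} [NormedAddCommGroup H] [InnerProductSpace ℂ H] [CompleteSpace H]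
    (S : Λ → H →L[ℂ] H)
    (hT : IsToeplitzFamily P d src rng mul S)
    (Q : G → H →L[ℂ] H)
    (hQ : ∀ p, p ∈ P → ∀ h : H,
      HasSum (fun μ : {a : Λ // d a = p} => S μ.1 (star (S μ.1) h)) (Q p h)) :
    ((∀ p ∈ P, ∀ q ∈ P,
        ((∃ r, IsUB P p q r) → ∀ r, IsLUB2 P p q r → Q p * Q q = Q r) ∧
        (¬ (∃ r, IsUB P p q r) → Q p * Q q = 0)) ↔
      TCKrel P d src rng mul S) := by
  have hdeg (p : G) (hp : p ∈ P) : IsDegreeProj d S p (Q p) := hQ p hp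
  rw [hT.tckRel_iff_rangeProjRel hPS]
  constructor
  · intro hNica a b M hM
    have ha := hPS.d_mem a
    have hb := hPS.d_mem b
    rw [← (hdeg _ ha).rangeProj_mul_mul_mul_rangeProj (hdeg _ hb) hT hPS]
    by_cases hub : ∃ r, IsUB P (d a) (d b) r
    · obtain ⟨r, hlub⟩ := hQLO.2 _ ha _ hb hub
      rw [(hNica _ ha _ hb).1 hub r hlub]
      exact (hdeg r hlub.1.1).rangeProj_mul_mul_rangeProj_eq_sum hT hPS hQLO hlub hM
    · have hempty : M = ∅ := Finset.coe_eq_empty.mp (hM.trans (MCE_eq_empty hub))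
      rw [(hNica _ ha _ hb).2 hub, hempty, mul_zero, zero_mul, Finset.sum_empty]
  · intro hrel p hp q hq
    refine ⟨fun _ r hlub => ?_, fun hub => ?_⟩
    · exact hrel.degreeProj_mul_degreeProj hT hPS hFA hp hq hlub (hdeg p hp) (hdeg q hq)
        (hdeg r hlub.1.1)
    · exact hrel.degreeProj_mul_degreeProj_eq_zero (hdeg p hp) (hdeg q hq) hub

end PSG
end
end

section
/- Let (E,φ) be a finitely aligned product system of graphs over ℕ^k such that s_{e_i}⁻¹(v) is infinite for every v ∈ E⁰ and every 1 ≤ i ≤ k. Then for every v ∈ E⁰ and every choice of finite sets G_m ⊆ s_{e_m}⁻¹(v) (1 ≤ m ≤ k) there exists μ ∈ E¹ with d(μ) = e_1 + ⋯ + e_k, s(μ) = v, and μ(0,e_i) ∉ G_i for every 1 ≤ i ≤ k; consequently MCE(λ,μ) = ∅ for every λ ∈ ⋃_{m=1}^k G_m. -/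
open scoped Classical

noncomputable section

namespace PSG

/-!
Build `μ` one degree at a time. Given a path `μ` of degree `q` and a degree `p` with
`p ∨ q = p q`, an extension `μ a` by an edge `a` of degree `p` has initial segment `λ` of degree
`p` only if `μ a ∈ MCE(λ, μ)`. Finite alignment and unique factorisation leave finitely many such
`a` for `λ` in a finite set, so one of the infinitely many edges of degree `p` starting at the
range of `μ` avoids them all. The segments avoided earlier stay avoided, since an initial segment
of `μ a` whose degree is at most that of `μ` already is one of `μ`.
-/

section Order

variable {G : Type*} [Group G] {P : Submonoid G}

theorem qle_mul_iff {g h r : G} : qle P (g * h) r ↔ qle P h (g⁻¹ * r) := by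
  rw [qle, qle, mul_inv_rev, mul_assoc]

theorem mem_of_qle {g h : G} (hg : g ∈ P) (hle : qle P g h) : h ∈ P := by
  simpa only [mul_inv_cancel_left] using mul_mem hg hle

end Order

section Orthogonality

variable {G : Type*} [CommGroup G] {P : Submonoid G}

/-- Orthogonality of two positive elements `p`, `q`, expressed as `p ∨ q = p q`; in a
lattice-ordered group this is equivalent to the usual `p ∧ q = 1`, but it makes sense even when
meets do not exist. It is the property of the generators of `ℕ^k` that the path construction
needs. -/
def Orthogonal (P : Submonoid G) (p q : G) : Prop := IsLUB2 P p q (p * q)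

theorem orthogonal_iff {p q : G} :
    Orthogonal P p q ↔ p ∈ P ∧ q ∈ P ∧ ∀ r, qle P p r → qle P q r → qle P (p * q) r := by
  have hp_le : qle P p (p * q) ↔ q ∈ P := by rw [qle, inv_mul_cancel_left]
  have hq_le : qle P q (p * q) ↔ p ∈ P := by rw [qle, mul_comm p, inv_mul_cancel_left]
  constructor
  · rintro ⟨⟨-, hp, hq⟩, hleast⟩
    exact ⟨hq_le.1 hq, hp_le.1 hp, fun r hpr hqr =>
      hleast r ⟨mem_of_qle (hq_le.1 hq) hpr, hpr, hqr⟩⟩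
  · rintro ⟨hp, hq, hleast⟩
    exact ⟨⟨mul_mem hp hq, hp_le.2 hq, hq_le.2 hp⟩, fun r ⟨_, hpr, hqr⟩ => hleast r hpr hqr⟩

theorem orthogonal_one_right {p : G} (hp : p ∈ P) : Orthogonal P p 1 :=
  orthogonal_iff.2 ⟨hp, one_mem P, fun _ hpr _ => (mul_one p).symm ▸ hpr⟩

theorem Orthogonal.mul_right {p q q' : G} (h : Orthogonal P p q) (h' : Orthogonal P p q') :
    Orthogonal P p (q * q') := by
  obtain ⟨hp, hq, hleast⟩ := orthogonal_iff.1 h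
  obtain ⟨-, hq', hleast'⟩ := orthogonal_iff.1 h'
  refine orthogonal_iff.2 ⟨hp, mul_mem hq hq', fun r hpr hqqr => ?_⟩
  -- The bound `p q ≤ r` says `p ≤ q⁻¹ r`, so orthogonality of `p` and `q'` applies to `q⁻¹ r`.
  have hq'_le : qle P q' (q⁻¹ * r) := qle_mul_iff.1 hqqr
  have hq_le : qle P q r := mem_of_qle hq' hq'_le
  have hp_le : qle P p (q⁻¹ * r) := qle_mul_iff.1 (mul_comm p q ▸ hleast r hpr hq_le)
  rw [mul_left_comm]
  exact qle_mul_iff.2 (hleast' _ hp_le hq'_le)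

theorem orthogonal_prod_right {ι : Type*} {p : G} {f : ι → G} {S : Finset ι} (hp : p ∈ P)
    (h : ∀ i ∈ S, Orthogonal P p (f i)) : Orthogonal P p (∏ i ∈ S, f i) :=
  Finset.prod_induction f (Orthogonal P p) (fun _ _ => Orthogonal.mul_right)
    (orthogonal_one_right hp) h

theorem qle_prod_of_mem {ι : Type*} {f : ι → G} {S : Finset ι} (hf : ∀ i ∈ S, f i ∈ P)
    {j : ι} (hj : j ∈ S) : qle P (f j) (∏ i ∈ S, f i) := by
  rw [qle, ← Finset.mul_prod_erase S f hj, inv_mul_cancel_left]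
  exact prod_mem fun i hi => hf i (Finset.mem_of_mem_erase hi)

end Orthogonality

section InitialSegments

variable {G : Type*} [Group G] {Λ : Type*} {P : Submonoid G} {d : Λ → G} {src rng : Λ → Λ}
  {mul : Λ → Λ → Λ}

theorem IsProductSystem.eq_and_eq_of_mul_eq_mul (h : IsProductSystem P d src rng mul)
    {a b a' b' : Λ} (hab : rng a = src b) (hab' : rng a' = src b') (hd : d a = d a')
    (hmul : mul a b = mul a' b') : a = a' ∧ b = b' := by
  have hdb : d b = d b' := by
    have hdmul := congrArg d hmul
    rw [h.d_mul _ _ hab, h.d_mul _ _ hab', hd] at hdmul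
    exact mul_left_cancel hdmul
  have hunique := (h.factor (d a) (d b) (h.d_mem a) (h.d_mem b) _ (h.d_mul _ _ hab)).unique
    (y₁ := (a, b)) (y₂ := (a', b')) ⟨rfl, rfl, hab, rfl⟩ ⟨hd.symm, hdb.symm, hab', hmul.symm⟩
  exact Prod.mk.inj hunique

theorem IsProductSystem.isInit_of_qle (h : IsProductSystem P d src rng mul) {l μ γ : Λ}
    (hl : IsInit src rng mul l γ) (hμ : IsInit src rng mul μ γ) (hle : qle P (d l) (d μ)) :
    IsInit src rng mul l μ := by
  obtain ⟨b, hlb, hb⟩ := hl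
  obtain ⟨a, hμa, rfl⟩ := hμ
  obtain ⟨⟨α, β⟩, ⟨hα, -, hαβ, rfl⟩, -⟩ :=
    h.factor (d l) ((d l)⁻¹ * d μ) (h.d_mem l) hle μ (mul_inv_cancel_left _ _).symm
  have hβa : rng β = src a := (h.rng_mul _ _ hαβ).symm.trans hμa
  have hαβa : rng α = src (mul β a) := hαβ.trans (h.src_mul _ _ hβa).symm
  have hmul : mul α (mul β a) = mul l b := by rw [← h.mul_assoc' _ _ _ hαβ hβa, hb]
  obtain ⟨rfl, -⟩ := h.eq_and_eq_of_mul_eq_mul hαβa hlb hα hmul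
  exact ⟨β, hαβ, rfl⟩

theorem IsProductSystem.MCE_eq_empty_of_not_isInit (h : IsProductSystem P d src rng mul)
    {l μ : Λ} (hle : qle P (d l) (d μ)) (hl : ¬ IsInit src rng mul l μ) :
    MCE P d src rng mul l μ = ∅ :=
  Set.eq_empty_of_forall_notMem fun _ hγ => hl (h.isInit_of_qle hγ.1 hγ.2.1 hle)

theorem IsProductSystem.finite_setOf_mul_mem (h : IsProductSystem P d src rng mul) (μ : Λ)
    {M : Set Λ} (hM : M.Finite) : {a | rng μ = src a ∧ mul μ a ∈ M}.Finite :=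
  Set.Finite.of_injOn (fun _ ha => ha.2)
    (fun _ ha _ hb hab => (h.eq_and_eq_of_mul_eq_mul ha.1 hb.1 rfl hab).2) hM

theorem IsProductSystem.exists_extension_avoiding (h : IsProductSystem P d src rng mul)
    (hFA : FinitelyAligned P d src rng mul) {μ : Λ} {q : G}
    (hinf : {a | d a = q ∧ src a = rng μ}.Infinite) {F : Finset Λ}
    (hF : ∀ l ∈ F, IsLUB2 P (d l) (d μ) (d μ * q)) :
    ∃ a, d a = q ∧ rng μ = src a ∧ ∀ l ∈ F, ¬ IsInit src rng mul l (mul μ a) := by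
  have hM : (⋃ l ∈ F, MCE P d src rng mul l μ).Finite :=
    F.finite_toSet.biUnion fun l _ => hFA l μ
  obtain ⟨a, ⟨rfl, hsa⟩, ha⟩ := hinf.exists_notMem_finite (h.finite_setOf_mul_mem μ hM)
  refine ⟨a, rfl, hsa.symm, fun l hl hinit => ha ⟨hsa.symm, Set.mem_biUnion hl ?_⟩⟩
  exact ⟨hinit, ⟨a, hsa.symm, rfl⟩, (h.d_mul μ a hsa.symm).symm ▸ hF l hl⟩

end InitialSegments

section AvoidingPaths

variable {G : Type*} [CommGroup G] {Λ ι : Type*} {P : Submonoid G} {d : Λ → G}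
  {src rng : Λ → Λ} {mul : Λ → Λ → Λ} {p : ι → G}

theorem IsProductSystem.exists_path_avoiding (h : IsProductSystem P d src rng mul)
    (hFA : FinitelyAligned P d src rng mul) (hp : ∀ i, p i ∈ P)
    (horth : Pairwise fun i j => Orthogonal P (p i) (p j))
    (hinf : ∀ v, d v = 1 → ∀ i, {a | d a = p i ∧ src a = v}.Infinite)
    {v : Λ} (hv : d v = 1) {F : ι → Finset Λ} (hF : ∀ i, ∀ l ∈ F i, d l = p i)
    (S : Finset ι) :
    ∃ μ, d μ = ∏ i ∈ S, p i ∧ src μ = v ∧ ∀ i ∈ S, ∀ l ∈ F i, ¬ IsInit src rng mul l μ := by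
  induction S using Finset.induction_on with
  | empty => exact ⟨v, by simpa using hv, h.src_vertex v hv, by simp⟩
  | insert j S hj ih =>
    obtain ⟨μ, hdμ, hsμ, hμ⟩ := ih
    have hlub : IsLUB2 P (p j) (d μ) (d μ * p j) := by
      rw [hdμ, mul_comm]
      exact orthogonal_prod_right (hp j) fun i hi => horth fun hji => hj (hji ▸ hi)
    obtain ⟨a, hda, hμa, ha⟩ := h.exists_extension_avoiding hFA
      (hinf (rng μ) (h.d_rng μ) j) fun l hl => (hF j l hl).symm ▸ hlub
    have hdμa : d (mul μ a) = ∏ i ∈ insert j S, p i := by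
      rw [h.d_mul _ _ hμa, hdμ, hda, Finset.prod_insert hj, mul_comm]
    refine ⟨mul μ a, hdμa, (h.src_mul _ _ hμa).trans hsμ,
      (Finset.forall_mem_insert _ _ _).2 ⟨ha, fun i hi l hl hinit => ?_⟩⟩
    have hle : qle P (d l) (d μ) := by
      rw [hF i l hl, hdμ]
      exact qle_prod_of_mem (fun i _ => hp i) hi
    exact hμ i hi l hl (h.isInit_of_qle hinit ⟨a, hμa, rfl⟩ hle)

theorem stmt15_general [Fintype ι] (h : IsProductSystem P d src rng mul)
    (hFA : FinitelyAligned P d src rng mul)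
    (horth : Pairwise fun i j => Orthogonal P (p i) (p j))
    (hinf : ∀ v, d v = 1 → ∀ i, {a | d a = p i ∧ src a = v}.Infinite)
    {v : Λ} (hv : d v = 1) {F : ι → Finset Λ} (hF : ∀ i, ∀ l ∈ F i, d l = p i) :
    ∃ μ, d μ = ∏ i, p i ∧ src μ = v ∧
      (∀ i α β, d α = p i → rng α = src β → mul α β = μ → α ∉ F i) ∧
      ∀ i, ∀ l ∈ F i, MCE P d src rng mul l μ = ∅ := by
  have hp : ∀ i, p i ∈ P := fun i =>
    let ⟨a, hda, _⟩ := (hinf v hv i).nonempty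
    hda ▸ h.d_mem a
  obtain ⟨μ, hdμ, hsμ, hμ⟩ := h.exists_path_avoiding hFA hp horth hinf hv hF Finset.univ
  have havoid : ∀ i, ∀ l ∈ F i, ¬ IsInit src rng mul l μ := fun i => hμ i (Finset.mem_univ i)
  have hle : ∀ i, ∀ l ∈ F i, qle P (d l) (d μ) := fun i l hl => by
    rw [hF i l hl, hdμ]
    exact qle_prod_of_mem (fun i _ => hp i) (Finset.mem_univ i)
  exact ⟨μ, hdμ, hsμ, fun i α β _ hαβ hmul hα => havoid i α hα ⟨β, hαβ, hmul⟩,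
    fun i l hl => h.MCE_eq_empty_of_not_isInit (hle i l hl) (havoid i l hl)⟩

end AvoidingPaths

section Generators

variable {k : ℕ}

theorem egen_mem_posCone (i : Fin k) : egen k i ∈ posCone k := fun j =>
  (Pi.single_nonneg.2 zero_le_one : (0 : Fin k → ℤ) ≤ Pi.single i 1) j

theorem qle_posCone_iff {g h : Multiplicative (Fin k → ℤ)} :
    qle (posCone k) g h ↔ g.toAdd ≤ h.toAdd :=
  forall_congr' fun _ => by simp

theorem pairwise_orthogonal_egen :
    Pairwise fun i j => Orthogonal (posCone k) (egen k i) (egen k j) := by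
  intro i j hij
  refine orthogonal_iff.2 ⟨egen_mem_posCone i, egen_mem_posCone j, fun r hir hjr => ?_⟩
  rw [qle_posCone_iff] at hir hjr ⊢
  intro m
  rcases eq_or_ne m i with rfl | hmi
  · simpa [egen, hij] using hir m
  · simpa [egen, hmi] using hjr m

end Generators

/-- The path-construction from the proof of the Corollary in §8: if every vertex receives
infinitely many edges of each degree `e_i`, then for all finite `G_m ⊆ s_{e_m}⁻¹(v)` there is
a path `μ` of degree `e_1 + ⋯ + e_k` with source `v` avoiding every `G_i` in its initial
segments; consequently `MCE(λ,μ) = ∅` for every `λ ∈ ⋃_m G_m`. -/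
theorem stmt15 {k : ℕ} {Λ : Type*}
    (d : Λ → Multiplicative (Fin k → ℤ)) (src rng : Λ → Λ) (mul : Λ → Λ → Λ)
    (hPS : IsProductSystem (posCone k) d src rng mul)
    (hFA : FinitelyAligned (posCone k) d src rng mul)
    (hinf : ∀ v, d v = 1 → ∀ i : Fin k,
      {a : Λ | d a = egen k i ∧ src a = v}.Infinite)
    (v : Λ) (hv : d v = 1) (Gm : Fin k → Finset Λ)
    (hGm : ∀ m : Fin k, ∀ a ∈ Gm m, d a = egen k m ∧ src a = v) :
    ∃ μ : Λ, d μ = (∏ i : Fin k, egen k i) ∧ src μ = v ∧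
      (∀ i : Fin k, ∀ α β : Λ, d α = egen k i → rng α = src β →
        mul α β = μ → α ∉ Gm i) ∧
      (∀ i : Fin k, ∀ l ∈ Gm i, MCE (posCone k) d src rng mul l μ = ∅) := by
  exact stmt15_general hPS hFA pairwise_orthogonal_egen hinf hv fun m a ha => (hGm m a ha).1

end PSG
end
end
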